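/- arXiv:1711.10889 — 2 statements merged into one kernel-verified Lean document; each statement's English description precedes it below -/
import Mathlib

section
/- Let G be a finite group, U : G → U(d) a unitary representation on ℂ^d, and define the twirling map E(ρ) = (1/|G|) Σ_{g∈G} U(g) ρ U(g)†. Let a ∈ (0,1)∪(1,2] and let ρ be a positive definite density matrix. Then the infimum over all positive definite density matrices σ satisfying U(g) σ U(g)† = σ for all g ∈ G of S̃_a(ρ|σ) equals (Tr((E(ρ^a))^{1/a}) − 1)/(a − 1). -/
open Matrix
open scoped ComplexOrder

/-- Matrix power `A ^ t` for real `t`, via the continuous functional calculus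
(applying `x ↦ x ^ t` to the eigenvalues of a Hermitian matrix `A`). -/
noncomputable def mpow {d : ℕ} (A : Matrix (Fin d) (Fin d) ℂ) (t : ℝ) :
    Matrix (Fin d) (Fin d) ℂ :=
  cfc (fun x : ℝ => x ^ t) A

/-- The Tsallis-based relative entropy
`S̃_a(ρ|σ) = ((Tr (ρ^a σ^(1-a)))^(1/a) - 1) / (a - 1)`. -/
noncomputable def tsallis {d : ℕ} (a : ℝ) (ρ σ : Matrix (Fin d) (Fin d) ℂ) : ℝ :=
  ((((mpow ρ a * mpow σ (1 - a)).trace).re) ^ (1 / a) - 1) / (a - 1)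

namespace Stmt16

variable {d : ℕ}

lemma contOn (A : Matrix (Fin d) (Fin d) ℂ) (hA : A.IsHermitian) (f : ℝ → ℝ) (g : ℝ → ℝ) :
    ContinuousOn f (Set.image g (spectrum ℝ A)) := by
  have : (Set.image g (spectrum ℝ A)).Finite := by
    rw [hA.spectrum_real_eq_range_eigenvalues]
    exact (Set.finite_range _).image _
  exact this.continuousOn f

lemma contOn' (A : Matrix (Fin d) (Fin d) ℂ) (hA : A.IsHermitian) (f : ℝ → ℝ) :
    ContinuousOn f (spectrum ℝ A) := by
  simpa using contOn A hA f id

lemma spec_pos {A : Matrix (Fin d) (Fin d) ℂ} (hA : A.PosDef) {x : ℝ}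
    (hx : x ∈ spectrum ℝ A) : 0 < x := by
  rw [hA.1.spectrum_real_eq_range_eigenvalues] at hx
  obtain ⟨i, rfl⟩ := hx
  exact hA.eigenvalues_pos i

lemma herm_cfc (A : Matrix (Fin d) (Fin d) ℂ) (f : ℝ → ℝ) : (cfc f A).IsHermitian :=
  (cfc_predicate f A : IsSelfAdjoint _)

lemma posDef_cfc {A : Matrix (Fin d) (Fin d) ℂ} (hA : A.PosDef) (f : ℝ → ℝ)
    (hf : ∀ x, 0 < x → 0 < f x) : (cfc f A).PosDef := by
  rw [(herm_cfc A f).posDef_iff_eigenvalues_pos]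
  intro i
  have h := (herm_cfc A f).eigenvalues_mem_spectrum_real i
  rw [cfc_map_spectrum f A hA.1.isSelfAdjoint (contOn' A hA.1 f)] at h
  obtain ⟨x, hx, h⟩ := h
  rw [← h]
  exact hf x (spec_pos hA hx)

lemma trace_formula {A B : Matrix (Fin d) (Fin d) ℂ} (hA : A.IsHermitian) (hB : B.IsHermitian) :
    ∃ w : Fin d → Fin d → ℝ, (∀ i j, 0 ≤ w i j) ∧ ∀ f g : ℝ → ℝ,
      (cfc f A * cfc g B).trace.re =
        ∑ i, ∑ j, w i j * (f (hA.eigenvalues i) * g (hB.eigenvalues j)) := by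
  set V : Matrix (Fin d) (Fin d) ℂ := (hA.eigenvectorUnitary).1 with hV
  set W : Matrix (Fin d) (Fin d) ℂ := (hB.eigenvectorUnitary).1 with hW
  refine ⟨fun i j => Complex.normSq ((star V * W) i j), fun i j => Complex.normSq_nonneg _, ?_⟩
  intro f g
  rw [hA.cfc_eq, hB.cfc_eq, Matrix.IsHermitian.cfc, Matrix.IsHermitian.cfc,
    Unitary.conjStarAlgAut_apply, Unitary.conjStarAlgAut_apply, ← hV, ← hW]
  set D₁ : Matrix (Fin d) (Fin d) ℂ := diagonal (RCLike.ofReal ∘ f ∘ hA.eigenvalues) with hD₁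
  set D₂ : Matrix (Fin d) (Fin d) ℂ := diagonal (RCLike.ofReal ∘ g ∘ hB.eigenvalues) with hD₂
  have h1 : (V * D₁ * star V * (W * D₂ * star W)).trace
      = (D₁ * (star V * W) * (D₂ * star (star V * W))).trace := by
    rw [star_mul, star_star]
    have : V * D₁ * star V * (W * D₂ * star W) = V * (D₁ * star V * (W * D₂ * star W)) := by
      simp only [Matrix.mul_assoc]
    rw [this, Matrix.trace_mul_comm]
    simp only [Matrix.mul_assoc]
  erw [h1]
  generalize star V * W = M
  rw [Matrix.trace]
  simp only [Matrix.diag_apply, Complex.re_sum]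
  refine Finset.sum_congr rfl fun i _ => ?_
  rw [Matrix.mul_apply, Complex.re_sum]
  refine Finset.sum_congr rfl fun j _ => ?_
  rw [hD₁, hD₂, Matrix.diagonal_mul, Matrix.diagonal_mul]
  simp [Matrix.star_apply, Complex.normSq_apply]
  ring

lemma young_lt {a p s : ℝ} (h0 : 0 < a) (h1 : a < 1) (hp : 0 < p) (hs : 0 < s) :
    p ^ a * s ^ (1 - a) ≤ a * p + (1 - a) * s :=
  Real.geom_mean_le_arith_mean2_weighted h0.le (by linarith) hp.le hs.le (by ring)

lemma young_gt {a p s : ℝ} (h1 : 1 < a) (hp : 0 < p) (hs : 0 < s) :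
    a * p + (1 - a) * s ≤ p ^ a * s ^ (1 - a) := by
  have h := one_add_mul_self_le_rpow_one_add (s := p / s - 1) (by
    have := div_pos hp hs; linarith) h1.le
  rw [add_sub_cancel, Real.div_rpow hp.le hs.le] at h
  rw [Real.rpow_sub hs, Real.rpow_one]
  have h2 := mul_le_mul_of_nonneg_right h hs.le
  have e1 : (1 + a * (p / s - 1)) * s = a * p + (1 - a) * s := by
    field_simp; ring
  rw [e1] at h2
  calc _ ≤ _ := h2
    _ = _ := by ring

lemma sums {A B : Matrix (Fin d) (Fin d) ℂ} (hA : A.IsHermitian) (hB : B.IsHermitian)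
    (hAt : A.trace = 1) (hBt : B.trace = 1) (a : ℝ) :
    ∃ w : Fin d → Fin d → ℝ, (∀ i j, 0 ≤ w i j) ∧
      (mpow A a * mpow B (1 - a)).trace.re = ∑ i, ∑ j, w i j *
        (hA.eigenvalues i ^ a * hB.eigenvalues j ^ (1 - a)) ∧
      ∑ i, ∑ j, w i j * (a * hA.eigenvalues i + (1 - a) * hB.eigenvalues j) = 1 := by
  obtain ⟨w, hw, h⟩ := trace_formula hA hB
  refine ⟨w, hw, h _ _, ?_⟩
  have e1 := h (fun x => x) (fun _ => 1)
  have e2 := h (fun _ => 1) (fun x => x)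
  rw [cfc_id' ℝ A hA.isSelfAdjoint, cfc_const_one ℝ B hB.isSelfAdjoint, mul_one, hAt] at e1
  rw [cfc_id' ℝ B hB.isSelfAdjoint, cfc_const_one ℝ A hA.isSelfAdjoint, one_mul, hBt] at e2
  simp only [mul_one, one_mul, Complex.one_re] at e1 e2
  have : ∑ i, ∑ j, w i j * (a * hA.eigenvalues i + (1 - a) * hB.eigenvalues j)
      = a * (∑ i, ∑ j, w i j * hA.eigenvalues i)
        + (1 - a) * ∑ i, ∑ j, w i j * hB.eigenvalues j := by
    simp only [Finset.mul_sum, ← Finset.sum_add_distrib]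
    refine Finset.sum_congr rfl fun i _ => Finset.sum_congr rfl fun j _ => ?_
    ring
  rw [this, ← e1, ← e2]
  ring

lemma klein_lt {A B : Matrix (Fin d) (Fin d) ℂ} (hA : A.PosDef) (hB : B.PosDef)
    (hAt : A.trace = 1) (hBt : B.trace = 1) {a : ℝ} (h0 : 0 < a) (h1 : a < 1) :
    (mpow A a * mpow B (1 - a)).trace.re ≤ 1 := by
  obtain ⟨w, hw, e1, e2⟩ := sums hA.1 hB.1 hAt hBt a
  rw [e1]
  refine le_trans ?_ e2.le
  exact Finset.sum_le_sum fun i _ => Finset.sum_le_sum fun j _ =>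
    mul_le_mul_of_nonneg_left (young_lt h0 h1 (hA.eigenvalues_pos i) (hB.eigenvalues_pos j))
      (hw i j)

lemma klein_gt {A B : Matrix (Fin d) (Fin d) ℂ} (hA : A.PosDef) (hB : B.PosDef)
    (hAt : A.trace = 1) (hBt : B.trace = 1) {a : ℝ} (h1 : 1 < a) :
    1 ≤ (mpow A a * mpow B (1 - a)).trace.re := by
  obtain ⟨w, hw, e1, e2⟩ := sums hA.1 hB.1 hAt hBt a
  rw [e1]
  refine le_trans e2.ge ?_
  exact Finset.sum_le_sum fun i _ => Finset.sum_le_sum fun j _ =>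
    mul_le_mul_of_nonneg_left (young_gt h1 (hA.eigenvalues_pos i) (hB.eigenvalues_pos j))
      (hw i j)

lemma trace_mpow_nonneg {A B : Matrix (Fin d) (Fin d) ℂ} (hA : A.PosDef) (hB : B.PosDef)
    (s t : ℝ) : 0 ≤ (mpow A s * mpow B t).trace.re := by
  obtain ⟨w, hw, h⟩ := trace_formula hA.1 hB.1
  rw [mpow, mpow, h]
  exact Finset.sum_nonneg fun i _ => Finset.sum_nonneg fun j _ => mul_nonneg (hw i j)
    (mul_nonneg (Real.rpow_nonneg (hA.eigenvalues_pos i).le _)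
      (Real.rpow_nonneg (hB.eigenvalues_pos j).le _))

lemma inv_iff_commute (V : Matrix.unitaryGroup (Fin d) ℂ) (X : Matrix (Fin d) (Fin d) ℂ) :
    (V : Matrix (Fin d) (Fin d) ℂ) * X * star (V : Matrix (Fin d) (Fin d) ℂ) = X ↔
      Commute X (V : Matrix (Fin d) (Fin d) ℂ) := by
  have h1 : star (V : Matrix (Fin d) (Fin d) ℂ) * V = 1 := Unitary.coe_star_mul_self V
  have h2 : (V : Matrix (Fin d) (Fin d) ℂ) * star (V : Matrix (Fin d) (Fin d) ℂ) = 1 :=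
    Unitary.coe_mul_star_self V
  constructor
  · intro h
    have := congrArg (· * (V : Matrix (Fin d) (Fin d) ℂ)) h
    simp only [Matrix.mul_assoc, h1, Matrix.mul_one] at this
    exact this.symm
  · intro h
    rw [← h.eq, Matrix.mul_assoc, h2, Matrix.mul_one]

end Stmt16

open Stmt16

/-- Asymmetry: for a unitary representation `U` of a finite group `G`, the twirling
map `E(ρ) = (1/|G|) Σ_g U(g) ρ U(g)†`, `a ∈ (0,1) ∪ (1,2]` and a positive definite
density matrix `ρ`, the infimum of `S̃_a(ρ|σ)` over positive definite `G`-invariant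
density matrices `σ` equals `(Tr((E(ρ^a))^(1/a)) - 1)/(a - 1)`. -/
theorem stmt_16 {d : ℕ} {G : Type} [Group G] [Fintype G]
    (U : G →* Matrix.unitaryGroup (Fin d) ℂ)
    (E : Matrix (Fin d) (Fin d) ℂ → Matrix (Fin d) (Fin d) ℂ)
    (hE : ∀ X, E X = ((Fintype.card G : ℂ))⁻¹ •
      ∑ g : G, (U g : Matrix (Fin d) (Fin d) ℂ) * X * star ((U g : Matrix (Fin d) (Fin d) ℂ)))
    (a : ℝ) (ha : a ∈ Set.Ioo (0 : ℝ) 1 ∪ Set.Ioc (1 : ℝ) 2)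
    (ρ : Matrix (Fin d) (Fin d) ℂ) (hρ : ρ.PosDef) (hρtr : ρ.trace = 1) :
    (⨅ σ : {σ : Matrix (Fin d) (Fin d) ℂ // σ.PosDef ∧ σ.trace = 1 ∧
        ∀ g : G, (U g : Matrix (Fin d) (Fin d) ℂ) * σ *
          star ((U g : Matrix (Fin d) (Fin d) ℂ)) = σ},
        tsallis a ρ (σ : Matrix (Fin d) (Fin d) ℂ))
      = (((mpow (E (mpow ρ a)) (1 / a)).trace).re - 1) / (a - 1) := by
  have hane : a ≠ 1 := by
    rcases ha with h | h
    · exact h.2.ne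
    · exact h.1.ne'
  have ha0 : 0 < a := by
    rcases ha with h | h
    · exact h.1
    · linarith [h.1]
  have hcard : (0 : ℂ) < (Fintype.card G : ℂ)⁻¹ := by
    have : (0 : ℝ) < (Fintype.card G : ℝ)⁻¹ := by
      have : 0 < Fintype.card G := Fintype.card_pos
      positivity
    have h2 : ((Fintype.card G : ℂ))⁻¹ = (((Fintype.card G : ℝ)⁻¹ : ℝ) : ℂ) := by push_cast; rfl
    rw [h2]
    exact_mod_cast this
  have hcard0 : (Fintype.card G : ℂ) ≠ 0 := by
    exact_mod_cast Fintype.card_ne_zero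
  have hne : Nonempty (Fin d) := by
    by_contra h
    rw [not_nonempty_iff] at h
    simp [Matrix.trace] at hρtr
  have hR : (mpow ρ a).PosDef := posDef_cfc hρ _ fun x hx => Real.rpow_pos_of_pos hx _
  set R := mpow ρ a with hRdef
  -- the twirled operator is positive definite
  have hX : (E R).PosDef := by
    rw [hE]
    refine Matrix.PosDef.smul ?_ hcard
    refine Finset.sum_induction_nonempty _ (fun M : Matrix (Fin d) (Fin d) ℂ => M.PosDef)
      (fun _ _ h1 h2 => h1.add h2) Finset.univ_nonempty ?_
    intro g _
    refine hR.mul_mul_conjTranspose_same ?_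
    refine Matrix.vecMul_injective_of_isUnit ?_
    exact (Unitary.toUnits (U g)).isUnit
  -- the twirled operator is invariant
  have hXinv : ∀ h : G, Commute (E R) (U h : Matrix (Fin d) (Fin d) ℂ) := by
    intro h
    rw [← inv_iff_commute, hE, Matrix.mul_smul, Matrix.smul_mul, Finset.mul_sum, Finset.sum_mul]
    congr 1
    refine Fintype.sum_equiv (Equiv.mulLeft h) _ _ fun g => ?_
    simp only [Equiv.coe_mulLeft, map_mul, Matrix.UnitaryGroup.mul_val, star_mul, Matrix.mul_assoc]
  -- twirling does not change the trace against invariant operators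
  have hEtr : ∀ M : Matrix (Fin d) (Fin d) ℂ,
      (∀ g, Commute M (U g : Matrix (Fin d) (Fin d) ℂ)) →
      (R * M).trace = (E R * M).trace := by
    intro M hM
    rw [hE, Matrix.smul_mul, Matrix.trace_smul, Finset.sum_mul, Matrix.trace_sum]
    have : ∀ g : G, ((U g : Matrix (Fin d) (Fin d) ℂ) * R *
        star (U g : Matrix (Fin d) (Fin d) ℂ) * M).trace = (R * M).trace := by
      intro g
      have h1 : star (U g : Matrix (Fin d) (Fin d) ℂ) * (U g : Matrix (Fin d) (Fin d) ℂ) = 1 :=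
        Unitary.coe_star_mul_self (U g)
      rw [Matrix.mul_assoc, Matrix.mul_assoc, Matrix.trace_mul_comm, Matrix.mul_assoc,
        Matrix.mul_assoc, (hM g).eq, ← Matrix.mul_assoc (star _), h1, Matrix.one_mul]
    simp only [this, Finset.sum_const, Finset.card_univ, nsmul_eq_mul, smul_eq_mul]
    field_simp
  set X := E R with hXdef
  have hXs : IsSelfAdjoint X := hX.1.isSelfAdjoint
  have hY : (mpow X (1 / a)).PosDef := posDef_cfc hX _ fun x hx => Real.rpow_pos_of_pos hx _
  set Z : ℝ := (mpow X (1 / a)).trace.re with hZ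
  have hYtr := hY.trace_pos
  have hZpos : 0 < Z := (Complex.lt_def.mp hYtr).1
  have hZc : (mpow X (1 / a)).trace = (Z : ℂ) := by
    apply Complex.ext
    · simp [hZ]
    · simpa using (Complex.lt_def.mp hYtr).2.symm
  -- the optimizer
  set τ : Matrix (Fin d) (Fin d) ℂ := cfc (fun x : ℝ => Z⁻¹ * x ^ (1 / a)) X with hτ
  have hτpd : τ.PosDef := posDef_cfc hX _ fun x hx => by
    have := Real.rpow_pos_of_pos hx (1 / a)
    positivity
  have hτeq : τ = Z⁻¹ • mpow X (1 / a) := by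
    rw [hτ, cfc_const_mul _ _ X (contOn' X hX.1 _), mpow]
  have hτtr : τ.trace = 1 := by
    rw [hτeq, Matrix.trace_smul, hZc, Complex.real_smul, ← Complex.ofReal_mul,
      inv_mul_cancel₀ hZpos.ne', Complex.ofReal_one]
  have hτinv : ∀ g, Commute τ (U g : Matrix (Fin d) (Fin d) ℂ) := fun g => (hXinv g).cfc_real _
  have hτpow : ∀ t : ℝ, mpow τ t = cfc (fun x : ℝ => (Z⁻¹ * x ^ (1 / a)) ^ t) X := by
    intro t
    rw [mpow, hτ, ← cfc_comp' (fun x : ℝ => x ^ t) _ X (contOn X hX.1 _ _) (contOn' X hX.1 _)]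
  have hXτ : X = (Z ^ a) • mpow τ a := by
    rw [hτpow, ← cfc_const_mul _ _ X (contOn' X hX.1 _)]
    conv_lhs => rw [← cfc_id' ℝ X]
    refine cfc_congr fun x hx => ?_
    have hx0 := spec_pos hX hx
    rw [Real.mul_rpow (by positivity) (by positivity), ← Real.rpow_mul hx0.le,
      one_div_mul_cancel ha0.ne', Real.rpow_one, Real.inv_rpow hZpos.le, ← mul_assoc,
      mul_inv_cancel₀ (Real.rpow_pos_of_pos hZpos a).ne', one_mul]
  -- trace functional at invariant states
  have htr : ∀ σ : Matrix (Fin d) (Fin d) ℂ,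
      (∀ g, Commute σ (U g : Matrix (Fin d) (Fin d) ℂ)) →
      (R * mpow σ (1 - a)).trace.re = Z ^ a * (mpow τ a * mpow σ (1 - a)).trace.re := by
    intro σ hσ
    rw [hEtr (mpow σ (1 - a)) fun g => (hσ g).cfc_real _]
    conv_lhs => rw [hXτ]
    rw [Matrix.smul_mul, Matrix.trace_smul, Complex.smul_re, smul_eq_mul]
  have hval : ∀ σ : Matrix (Fin d) (Fin d) ℂ, σ.PosDef →
      (∀ g, Commute σ (U g : Matrix (Fin d) (Fin d) ℂ)) →
      tsallis a ρ σ =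
        (Z * (mpow τ a * mpow σ (1 - a)).trace.re ^ (1 / a) - 1) / (a - 1) := by
    intro σ hσp hσ
    rw [tsallis, ← hRdef, htr σ hσ, Real.mul_rpow (by positivity)
      (trace_mpow_nonneg hτpd hσp _ _), ← Real.rpow_mul hZpos.le, mul_one_div_cancel ha0.ne',
      Real.rpow_one]
  have hττ : (mpow τ a * mpow τ (1 - a)).trace.re = 1 := by
    have : mpow τ a * mpow τ (1 - a) = τ := by
      rw [mpow, mpow, ← cfc_mul _ _ τ (contOn' τ hτpd.1 _) (contOn' τ hτpd.1 _)]
      conv_rhs => rw [← cfc_id' ℝ τ hτpd.1.isSelfAdjoint]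
      refine cfc_congr fun x hx => ?_
      rw [← Real.rpow_add (spec_pos hτpd hx), add_sub_cancel, Real.rpow_one]
    rw [this, hτtr, Complex.one_re]
  refine IsLeast.csInf_eq ⟨⟨⟨τ, hτpd, hτtr, fun g => (inv_iff_commute _ _).2 (hτinv g)⟩, ?_⟩, ?_⟩
  · simp only
    rw [hval τ hτpd hτinv, hττ, Real.one_rpow, mul_one]
  · rintro _ ⟨⟨σ, hσp, hσt, hσi⟩, rfl⟩
    simp only
    have hσc := fun g => (inv_iff_commute (U g) σ).1 (hσi g)
    rw [hval σ hσp hσc]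
    have hnn := trace_mpow_nonneg hτpd hσp a (1 - a)
    have h1a : 0 < 1 / a := by positivity
    rcases ha with h | h
    · have hk := Real.rpow_le_one hnn (klein_lt hτpd hσp hτtr hσt h.1 h.2) h1a.le
      apply div_le_div_of_nonpos_of_le (by linarith [h.2])
      nlinarith
    · have hk := Real.one_le_rpow (klein_gt hτpd hσp hτtr hσt h.1) h1a.le
      apply div_le_div_of_nonneg_right _ (by linarith [h.1])
      nlinarith
end

section
/- Let E be a unital idempotent CPTP map on d×d complex matrices, let a ∈ (0,1)∪(1,2], and let ρ be a positive definite density matrix. Then (Tr((E(ρ^a))^{1/a}) − 1)/(a − 1) ≥ 0, with equality if and only if E(ρ) = ρ. -/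
open Matrix
open scoped ComplexOrder

/-- Jensen for a doubly stochastic matrix, with equality case. -/
lemma ds_jensen {d : ℕ} (D : Fin d → Fin d → ℝ) (hD : ∀ i j, 0 ≤ D i j)
    (hrow : ∀ i, ∑ j, D i j = 1) (hcol : ∀ j, ∑ i, D i j = 1)
    (l m : Fin d → ℝ) (hl : ∀ j, 0 ≤ l j) (hm : ∀ i, m i = ∑ j, D i j * l j)
    (f : ℝ → ℝ) (hf : StrictConvexOn ℝ (Set.Ici 0) f) :
    ∑ i, f (m i) ≤ ∑ j, f (l j) ∧
    (∑ i, f (m i) = ∑ j, f (l j) → ∀ i j, D i j ≠ 0 → l j = m i) := by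
  have key : ∀ i, f (m i) ≤ ∑ j, D i j * f (l j) := by
    intro i
    have := hf.convexOn.map_sum_le (t := Finset.univ) (w := D i) (p := l)
      (fun j _ => hD i j) (hrow i) (fun j _ => hl j)
    simpa [hm i] using this
  have hsum : ∑ i, ∑ j, D i j * f (l j) = ∑ j, f (l j) := by
    rw [Finset.sum_comm]
    refine Finset.sum_congr rfl fun j _ => ?_
    rw [← Finset.sum_mul, hcol, one_mul]
  constructor
  · rw [← hsum]; exact Finset.sum_le_sum fun i _ => key i
  · intro h i j hij
    rw [← hsum] at h
    have h2 := (Finset.sum_eq_sum_iff_of_le (fun i _ => key i)).1 h i (Finset.mem_univ _)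
    have h3 := (hf.map_sum_eq_iff' (t := Finset.univ) (w := D i) (p := l)
      (fun j _ => hD i j) (hrow i) (fun j _ => hl j)).1 (by simpa [hm i] using h2)
    have := h3 j (Finset.mem_univ j) hij
    simpa [hm i] using this

lemma herm_decomp {d : ℕ} {A : Matrix (Fin d) (Fin d) ℂ} (hA : A.IsHermitian) :
    ∃ U : Matrix (Fin d) (Fin d) ℂ, Uᴴ * U = 1 ∧ U * Uᴴ = 1 ∧
      A = U * diagonal (fun i => (hA.eigenvalues i : ℂ)) * Uᴴ ∧
      ∀ f : ℝ → ℝ, (cfc f A).trace.re = ∑ i, f (hA.eigenvalues i) := by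
  refine ⟨hA.eigenvectorUnitary, ?_, ?_, ?_, ?_⟩
  · exact Unitary.coe_star_mul_self hA.eigenvectorUnitary
  · exact Unitary.coe_mul_star_self hA.eigenvectorUnitary
  · have := hA.spectral_theorem
    rw [Unitary.conjStarAlgAut_apply] at this
    exact this
  · intro f
    rw [hA.cfc_eq, IsHermitian.cfc, Unitary.conjStarAlgAut_apply, trace_mul_comm, ← mul_assoc]
    simp [trace]

lemma kraus_jensen {d n : ℕ} (K : Fin n → Matrix (Fin d) (Fin d) ℂ)
    (hTP : ∑ i, (K i)ᴴ * K i = 1) (hU : ∑ i, K i * (K i)ᴴ = 1)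
    (A B : Matrix (Fin d) (Fin d) ℂ) (hA : A.PosSemidef) (hB : B.IsHermitian)
    (hAB : B = ∑ i, K i * A * (K i)ᴴ)
    (f : ℝ → ℝ) (hf : StrictConvexOn ℝ (Set.Ici 0) f) :
    (cfc f B).trace.re ≤ (cfc f A).trace.re ∧
    ((cfc f B).trace.re = (cfc f A).trace.re → ∀ i, K i * A = B * K i) := by
  obtain ⟨U, hU1, hU2, hUA, hUf⟩ := herm_decomp hA.1
  obtain ⟨V, hV1, hV2, hVB, hVf⟩ := herm_decomp hB
  set l := hA.1.eigenvalues
  set m := hB.eigenvalues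
  let M : Fin n → Matrix (Fin d) (Fin d) ℂ := fun k => Vᴴ * K k * U
  have hMh : ∀ k, (M k)ᴴ = Uᴴ * (K k)ᴴ * V := by
    intro k; simp [M, conjTranspose_mul, mul_assoc]
  have hM1 : ∑ k, (M k)ᴴ * M k = 1 := by
    have : ∀ k, (M k)ᴴ * M k = Uᴴ * ((K k)ᴴ * K k) * U := by
      intro k
      rw [hMh]
      calc _ = Uᴴ * (K k)ᴴ * (V * Vᴴ) * K k * U := by simp only [M, mul_assoc]
        _ = _ := by rw [hV2]; simp only [mul_assoc, mul_one, one_mul]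
    simp_rw [this]
    rw [← Finset.sum_mul, ← Finset.mul_sum, hTP, mul_one, hU1]
  have hM2 : ∑ k, M k * (M k)ᴴ = 1 := by
    have : ∀ k, M k * (M k)ᴴ = Vᴴ * (K k * (K k)ᴴ) * V := by
      intro k
      rw [hMh]
      calc _ = Vᴴ * K k * (U * Uᴴ) * (K k)ᴴ * V := by simp only [M, mul_assoc]
        _ = _ := by rw [hU2]; simp only [mul_assoc, mul_one, one_mul]
    simp_rw [this]
    rw [← Finset.sum_mul, ← Finset.mul_sum, hU, mul_one, hV1]
  have hM3 : ∑ k, M k * diagonal (fun i => (l i : ℂ)) * (M k)ᴴ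
      = diagonal (fun i => (m i : ℂ)) := by
    have : ∀ k, M k * diagonal (fun i => (l i : ℂ)) * (M k)ᴴ
        = Vᴴ * (K k * A * (K k)ᴴ) * V := by
      intro k
      rw [hMh, hUA]
      simp only [M, mul_assoc]
    simp_rw [this]
    rw [← Finset.sum_mul, ← Finset.mul_sum, ← hAB, hVB]
    calc _ = (Vᴴ * V) * diagonal (fun i => (m i : ℂ)) * (Vᴴ * V) := by simp only [mul_assoc]
      _ = _ := by rw [hV1, one_mul, mul_one]
  let D : Fin d → Fin d → ℝ := fun i j => ∑ k, Complex.normSq (M k i j)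
  have hD : ∀ i j, 0 ≤ D i j := fun i j => Finset.sum_nonneg fun k _ => Complex.normSq_nonneg _
  have hrow : ∀ i, ∑ j, D i j = 1 := by
    intro i
    have h := congrFun (congrFun hM2 i) i
    rw [Matrix.sum_apply] at h
    simp only [mul_apply, conjTranspose_apply, one_apply_eq, RCLike.star_def,
      Complex.mul_conj] at h
    simp only [D]
    rw [Finset.sum_comm]
    exact_mod_cast h
  have hcol : ∀ j, ∑ i, D i j = 1 := by
    intro i
    have h := congrFun (congrFun hM1 i) i
    rw [Matrix.sum_apply] at h
    simp only [mul_apply, conjTranspose_apply, one_apply_eq, RCLike.star_def,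
      ← Complex.normSq_eq_conj_mul_self] at h
    simp only [D]
    rw [Finset.sum_comm]
    exact_mod_cast h
  have hm : ∀ i, m i = ∑ j, D i j * l j := by
    intro i
    have h := congrFun (congrFun hM3 i) i
    rw [Matrix.sum_apply] at h
    rw [diagonal_apply_eq] at h
    have h' : ∀ k, (M k * diagonal (fun i => (l i : ℂ)) * (M k)ᴴ) i i
        = ∑ j, (Complex.normSq (M k i j) : ℂ) * (l j : ℂ) := by
      intro k
      rw [mul_apply]
      refine Finset.sum_congr rfl fun j _ => ?_
      rw [mul_diagonal, conjTranspose_apply, RCLike.star_def, mul_right_comm, Complex.mul_conj]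
    simp only [h'] at h
    simp only [D, Finset.sum_mul]
    rw [Finset.sum_comm]
    exact_mod_cast h.symm
  obtain ⟨h1, h2⟩ := ds_jensen D hD hrow hcol l m hA.eigenvalues_nonneg hm f hf
  rw [hUf, hVf]
  refine ⟨h1, fun he k => ?_⟩
  have h3 := h2 he
  have hMk : M k * diagonal (fun i => (l i : ℂ)) = diagonal (fun i => (m i : ℂ)) * M k := by
    ext i j
    rw [mul_diagonal, diagonal_mul]
    by_cases hij : D i j = 0
    · have := (Finset.sum_eq_zero_iff_of_nonneg
        (fun k _ => Complex.normSq_nonneg (M k i j))).1 hij k (Finset.mem_univ _)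
      rw [Complex.normSq_eq_zero.1 this]; simp
    · rw [h3 i j hij, mul_comm]
  calc K k * A = V * (M k * diagonal (fun i => (l i : ℂ))) * Uᴴ := by
        rw [hUA]
        calc _ = 1 * (K k * (U * diagonal (fun i => (l i : ℂ)) * Uᴴ)) := by rw [one_mul]
          _ = _ := by rw [← hV2]; simp only [M, mul_assoc]
    _ = V * (diagonal (fun i => (m i : ℂ)) * M k) * Uᴴ := by rw [hMk]
    _ = B * K k := by
        rw [hVB]
        calc _ = V * diagonal (fun i => (m i : ℂ)) * Vᴴ * K k * (U * Uᴴ) := by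
              simp only [M, mul_assoc]
          _ = _ := by rw [hU2, mul_one]

lemma kraus_fixed {d n : ℕ} (K : Fin n → Matrix (Fin d) (Fin d) ℂ)
    (hTP : ∑ i, (K i)ᴴ * K i = 1) (hU : ∑ i, K i * (K i)ᴴ = 1)
    (A : Matrix (Fin d) (Fin d) ℂ) (hA : A.PosSemidef)
    (hAA : ∑ i, K i * A * (K i)ᴴ = A) : ∀ i, K i * A = A * K i :=
  (kraus_jensen K hTP hU A A hA hA.1 hAA.symm (fun x => x ^ (2 : ℝ))
    (strictConvexOn_rpow one_lt_two)).2 rfl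

lemma kraus_commute_cfc {d n : ℕ} (K : Fin n → Matrix (Fin d) (Fin d) ℂ)
    (hU : ∑ i, K i * (K i)ᴴ = 1)
    (A : Matrix (Fin d) (Fin d) ℂ) (hA : A.IsHermitian)
    (hK : ∀ i, K i * A = A * K i) (f : ℝ → ℝ) :
    ∑ i, K i * cfc f A * (K i)ᴴ = cfc f A := by
  have : ∀ i, K i * cfc f A = cfc f A * K i := by
    intro i
    have hc : Commute A (K i) := (hK i).symm
    exact (hc.cfc_real f).eq.symm
  simp_rw [this, mul_assoc]
  rw [← Finset.mul_sum, hU, mul_one]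

lemma mpow_posSemidef {d : ℕ} (A : Matrix (Fin d) (Fin d) ℂ) (hA : A.PosSemidef) (t : ℝ) :
    (mpow A t).PosSemidef := by
  open scoped MatrixOrder in
  rw [← Matrix.nonneg_iff_posSemidef]
  refine cfc_nonneg fun x hx => ?_
  rw [hA.1.spectrum_real_eq_range_eigenvalues] at hx
  obtain ⟨i, rfl⟩ := hx
  exact Real.rpow_nonneg (hA.eigenvalues_nonneg i) t

lemma mpow_mpow_inv {d : ℕ} (A : Matrix (Fin d) (Fin d) ℂ) (hA : A.PosSemidef) (t : ℝ)
    (ht : t ≠ 0) : mpow (mpow A t) (1 / t) = A := by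
  have hfin : (spectrum ℝ A).Finite := by
    rw [hA.1.spectrum_real_eq_range_eigenvalues]; exact Set.finite_range _
  unfold mpow
  have hcomp := cfc_comp' (p := IsSelfAdjoint) (fun x : ℝ => x ^ (1 / t)) (fun x : ℝ => x ^ t) A
    ((hfin.image _).continuousOn _) (hfin.continuousOn _) hA.1
  refine hcomp.symm.trans ?_
  conv_rhs => rw [← cfc_id' ℝ A hA.1]
  refine cfc_congr fun x hx => ?_
  rw [hA.1.spectrum_real_eq_range_eigenvalues] at hx
  obtain ⟨i, rfl⟩ := hx
  rw [← Real.rpow_mul (hA.eigenvalues_nonneg i), mul_one_div_cancel ht, Real.rpow_one]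

/-- For a unital idempotent CPTP map `E`, `a ∈ (0,1) ∪ (1,2]` and a positive definite
density matrix `ρ`, the closed-form resource measure `(Tr((E(ρ^a))^(1/a)) - 1)/(a - 1)`
is nonnegative, and it vanishes if and only if `ρ` is a fixed point of `E`. -/
theorem stmt_17 {d : ℕ}
    (E : Matrix (Fin d) (Fin d) ℂ →ₗ[ℂ] Matrix (Fin d) (Fin d) ℂ)
    (hKraus : ∃ (n : ℕ) (K : Fin n → Matrix (Fin d) (Fin d) ℂ),
      (∀ X, E X = ∑ i, K i * X * (K i)ᴴ) ∧ ∑ i, (K i)ᴴ * K i = 1)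
    (hUnital : E 1 = 1)
    (hIdem : ∀ X, E (E X) = E X)
    (a : ℝ) (ha : a ∈ Set.Ioo (0 : ℝ) 1 ∪ Set.Ioc (1 : ℝ) 2)
    (ρ : Matrix (Fin d) (Fin d) ℂ) (hρ : ρ.PosDef) (hρtr : ρ.trace = 1) :
    0 ≤ (((mpow (E (mpow ρ a)) (1 / a)).trace).re - 1) / (a - 1) ∧
    ((((mpow (E (mpow ρ a)) (1 / a)).trace).re - 1) / (a - 1) = 0 ↔ E ρ = ρ) := by
  obtain ⟨n, K, hK, hTP⟩ := hKraus
  have hU : ∑ i, K i * (K i)ᴴ = 1 := by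
    rw [hK] at hUnital; simpa using hUnital
  have ha0 : 0 < a := by rcases ha with h | h <;> linarith [h.1]
  have ha1 : a ≠ 1 := by
    rcases ha with h | h
    · exact h.2.ne
    · exact h.1.ne'
  have hA := mpow_posSemidef ρ hρ.posSemidef a
  have hAinv := mpow_mpow_inv ρ hρ.posSemidef a ha0.ne'
  set A := mpow ρ a with hAdef
  have hB : (E A).PosSemidef := by
    rw [hK]
    exact posSemidef_sum _ fun i _ => hA.mul_mul_conjTranspose_same (K i)
  have htr : (mpow A (1 / a)).trace.re = 1 := by rw [hAinv, hρtr]; simp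
  -- equality case
  have hback : (∀ i, K i * A = E A * K i) → E ρ = ρ := by
    intro h
    have hBK := kraus_fixed K hTP hU (E A) hB (by rw [← hK, hIdem])
    have hEA : E A = A := by
      have h1 : ∀ i, (K i)ᴴ * K i * A = (K i)ᴴ * K i * E A := by
        intro i; rw [mul_assoc, mul_assoc, h, hBK]
      have h2 : ∑ i, (K i)ᴴ * K i * A = ∑ i, (K i)ᴴ * K i * E A :=
        Finset.sum_congr rfl fun i _ => h1 i
      rw [← Finset.sum_mul, ← Finset.sum_mul, hTP, one_mul, one_mul] at h2
      exact h2.symm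
    rw [hEA] at h
    rw [hK, ← hAinv]
    exact kraus_commute_cfc K hU A hA.1 h _
  have hforw : E ρ = ρ → (mpow (E A) (1 / a)).trace.re - 1 = 0 := by
    intro h
    have h1 := kraus_fixed K hTP hU ρ hρ.posSemidef (by rw [← hK, h])
    have h2 : E A = A := by
      rw [hK]; exact kraus_commute_cfc K hU ρ hρ.1 h1 _
    rw [h2, htr, sub_self]
  have hiff : (mpow (E A) (1 / a)).trace.re - 1 = 0 → (∀ i, K i * A = E A * K i) := by
    intro h
    rcases ha with h' | h'
    · refine (kraus_jensen K hTP hU A (E A) hA hB.1 (hK A) (fun x => x ^ (1 / a))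
        (strictConvexOn_rpow (one_lt_one_div ha0 h'.2))).2 ?_
      have := htr
      unfold mpow at this h
      linarith
    · refine (kraus_jensen K hTP hU A (E A) hA hB.1 (hK A) (fun x => -x ^ (1 / a))
        (Real.strictConcaveOn_rpow (by positivity)
          ((div_lt_one ha0).2 h'.1)).neg).2 ?_
      rw [cfc_neg, cfc_neg]
      have := htr
      unfold mpow at this h
      simp only [trace_neg, Complex.neg_re]
      linarith
  refine ⟨?_, ?_⟩
  · rcases ha with h' | h'
    · have := (kraus_jensen K hTP hU A (E A) hA hB.1 (hK A) (fun x => x ^ (1 / a))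
        (strictConvexOn_rpow (one_lt_one_div ha0 h'.2))).1
      refine div_nonneg_of_nonpos ?_ (by linarith [h'.2])
      unfold mpow at htr ⊢
      linarith
    · have := (kraus_jensen K hTP hU A (E A) hA hB.1 (hK A) (fun x => -x ^ (1 / a))
        (Real.strictConcaveOn_rpow (by positivity)
          ((div_lt_one ha0).2 h'.1)).neg).1
      rw [cfc_neg, cfc_neg] at this
      simp only [trace_neg, Complex.neg_re] at this
      refine div_nonneg ?_ (by linarith [h'.1])
      unfold mpow at htr ⊢
      linarith
  · rw [div_eq_zero_iff]
    constructor
    · rintro (h | h)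
      · exact hback (hiff h)
      · exact absurd (sub_eq_zero.1 h) ha1
    · exact fun h => Or.inl (hforw h)
end
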